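/- Let S[1..n] be a string over a linearly ordered alphabet. For every index 1 ≤ i ≤ n there is at most one index j > i with PC_S(j) = i; consequently, the global-parent representation GP_S is well-defined. -/

import Mathlib

/-!
If `i < j` and `PC S j = i`, then `S[j] < S[i]`, while `S[i] ≤ S[m]` for every `m` strictly
between `i` and `j` (`PC_spec`): `i` is the ≺-minimum of the positions before `j` that lie beyond
its prefix parent (of all positions before `j` if there is no proper one), and none of these
positions `m` satisfies `S[m] ≺ S[j]` (`lt_of_PP_lt`).
Two such indices `j < k` would contradict each other: `j` lies strictly between `i` and `k`,
so `S[i] ≤ S[j]`, against `S[j] < S[i]`.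
-/

namespace CTM

variable {α : Type*} [LinearOrder α] {n : ℕ}

/-- `S[i] ≺ S[j]`: strict order on positions, values compared first, ties broken
toward the smaller index. -/
def prec (S : Fin n → α) (i j : Fin n) : Prop :=
  S i < S j ∨ (S i = S j ∧ i < j)

instance (S : Fin n → α) (i j : Fin n) : Decidable (prec S i j) :=
  inferInstanceAs (Decidable (_ ∨ _))

/-- `S[i] ⪯ S[j]`. -/
def preceq (S : Fin n → α) (i j : Fin n) : Prop :=
  i = j ∨ prec S i j

/-- The set `{j : j < i and S[j] ≺ S[i]}`. -/
def PPset (S : Fin n → α) (i : Fin n) : Finset (Fin n) :=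
  Finset.univ.filter (fun j => j < i ∧ prec S j i)

/-- Prefix-parent representation. -/
def PP (S : Fin n → α) (i : Fin n) : Fin n :=
  if h : (PPset S i).Nonempty then (PPset S i).max' h else i

lemma PP_le (S : Fin n → α) (i : Fin n) : PP S i ≤ i := by
  unfold PP
  split
  · next h =>
      have hm := (PPset S i).max'_mem h
      simp only [PPset, Finset.mem_filter] at hm
      exact le_of_lt hm.2.1
  · exact le_refl i

/-- The ≺-minimum position of a nonempty finite set of positions. -/
noncomputable def minPos (S : Fin n → α) (F : Finset (Fin n)) (h : F.Nonempty) : Fin n :=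
  (F.exists_min_image (fun j => toLex (S j, j)) h).choose

lemma minPos_mem (S : Fin n → α) (F : Finset (Fin n)) (h : F.Nonempty) :
    minPos S F h ∈ F :=
  (F.exists_min_image (fun j => toLex (S j, j)) h).choose_spec.1

/-- Prefix-child representation (0-indexed: position `0` is the first position). -/
noncomputable def PC (S : Fin n → α) (i : Fin n) : Fin n :=
  if h0 : i.val = 0 then i
  else if h1 : PP S i = i then
    minPos S (Finset.univ.filter (fun j => j < i))
      ⟨⟨0, i.pos⟩, Finset.mem_filter.mpr ⟨Finset.mem_univ _, by
        simp only [Fin.lt_def]; omega⟩⟩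
  else if _h2 : (PP S i).val + 1 = i.val then i
  else
    minPos S (Finset.univ.filter (fun j => PP S i < j ∧ j < i))
      ⟨⟨(PP S i).val + 1, by
          have h3 : (PP S i).val < i.val := Fin.lt_def.mp (lt_of_le_of_ne (PP_le S i) h1)
          have h4 := i.isLt
          omega⟩,
        Finset.mem_filter.mpr ⟨Finset.mem_univ _, by
          have h3 : (PP S i).val < i.val := Fin.lt_def.mp (lt_of_le_of_ne (PP_le S i) h1)
          constructor <;> simp only [Fin.lt_def] <;> omega⟩⟩

/-- Global-parent representation. -/
noncomputable def GP (S : Fin n → α) (i : Fin n) : Fin n :=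
  if h : ∃ j, i < j ∧ PC S j = i then h.choose else PP S i

/-- Binary trees whose nodes are positions of a string of length `n`. -/
inductive PosTree (n : ℕ) where
  | nil : PosTree n
  | node : Fin n → PosTree n → PosTree n → PosTree n

/-- The Cartesian tree of the restriction of `S` to a finite set of positions. -/
noncomputable def CTAux (S : Fin n → α) (F : Finset (Fin n)) : PosTree n :=
  if h : F.Nonempty then
    PosTree.node (minPos S F h)
      (CTAux S (F.filter (fun j => j < minPos S F h)))
      (CTAux S (F.filter (fun j => minPos S F h < j)))
  else PosTree.nil
termination_by F.card
decreasing_by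
  · exact Finset.card_lt_card
      (Finset.filter_ssubset.mpr ⟨minPos S F h, minPos_mem S F h, by simp⟩)
  · exact Finset.card_lt_card
      (Finset.filter_ssubset.mpr ⟨minPos S F h, minPos_mem S F h, by simp⟩)

/-- The Cartesian tree of a string, as a binary tree on positions. -/
noncomputable def CT (S : Fin n → α) : PosTree n :=
  CTAux S Finset.univ

/-- Parent-distance representation. -/
def PD (S : Fin n → α) (i : Fin n) : ℕ :=
  if h : (PPset S i).Nonempty then i.val - ((PPset S i).max' h).val else 0


/-- A position before `j` carries a value strictly larger than `S[j]` if it lies beyond the prefix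
parent of `j`, or if `j` has no proper prefix parent (encoded by `PP S j = j`): as ties favour the
smaller index, `S[m] ≤ S[j]` with `m < j` would put `m` in `PPset S j`. -/
lemma lt_of_PP_lt (S : Fin n → α) {j m : Fin n} (hm : m < j)
    (h : PP S j = j ∨ PP S j < m) : S j < S m := by
  by_contra! hle
  have hmem : m ∈ PPset S j :=
    Finset.mem_filter.mpr
      ⟨Finset.mem_univ _, hm, hle.lt_or_eq.imp id fun e => ⟨e, hm⟩⟩
  have hne : (PPset S j).Nonempty := ⟨m, hmem⟩
  have hPP : PP S j = (PPset S j).max' hne := by simp [PP, hne]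
  have hle' : m ≤ PP S j := hPP ▸ Finset.le_max' _ _ hmem
  have hlt : PP S j < j := by
    have hmax := (PPset S j).max'_mem hne
    rw [← hPP] at hmax
    simp only [PPset, Finset.mem_filter] at hmax
    exact hmax.2.1
  rcases h with h | h
  · exact hlt.ne h
  · exact absurd h hle'.not_gt

lemma minPos_le (S : Fin n → α) (F : Finset (Fin n)) (h : F.Nonempty) {m : Fin n}
    (hm : m ∈ F) : S (minPos S F h) ≤ S m := by
  have hlex := (F.exists_min_image (fun j => toLex (S j, j)) h).choose_spec.2 m hm
  exact (Prod.Lex.toLex_le_toLex.mp hlex).elim le_of_lt fun e => e.1.le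

/-- If the prefix child `i` of `j` is a proper one, then `S[j]` is below `S[i]` and `S[i]` is
minimal among the values strictly between `i` and `j`. -/
lemma PC_spec (S : Fin n → α) {i j : Fin n} (hij : i < j) (h : PC S j = i) :
    S j < S i ∧ ∀ m, i < m → m < j → S i ≤ S m := by
  unfold PC at h
  split_ifs at h with h0 h1 h2
  · exact absurd h hij.ne'
  · refine ⟨lt_of_PP_lt S hij (Or.inl h1), fun m _ hmj => ?_⟩
    rw [← h]
    exact minPos_le S _ _ (by simpa using hmj)
  · exact absurd h hij.ne'
  · have hi : PP S j < i := by
      rw [← h]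
      exact (Finset.mem_filter.mp
        (minPos_mem S (Finset.univ.filter fun m => PP S j < m ∧ m < j) _)).2.1
    refine ⟨lt_of_PP_lt S hij (Or.inr hi), fun m him hmj => ?_⟩
    rw [← h]
    exact minPos_le S _ _ (by simpa using ⟨hi.trans him, hmj⟩)

/-- For every index `i` there is at most one `j > i` with `PC_S(j) = i`;
hence the global-parent representation is well-defined. -/
theorem pc_parent_unique (S : Fin n → α) (i : Fin n) :
    ∀ j k : Fin n, i < j → i < k → PC S j = i → PC S k = i → j = k := by
  intro j k hij hik hj hk
  obtain ⟨hji, hjmin⟩ := PC_spec S hij hj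
  obtain ⟨hki, hkmin⟩ := PC_spec S hik hk
  rcases lt_trichotomy j k with hjk | hjk | hjk
  · exact absurd hji (hkmin j hij hjk).not_gt
  · exact hjk
  · exact absurd hki (hjmin k hik hjk).not_gt

end CTM
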